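/- Geometric convergence rate of the gradient flow (Theorem 2, part 2). Assume the pair (A, C A) is observable. Suppose L_KF ∈ 𝒮 satisfies K(L_KF) = 0 and is the unique stabilizing gain with this property, and that J attains its minimum over 𝒮 at L_KF. Let L : [0, ∞) → ℝ^{n×p} be continuously differentiable with L(t) ∈ 𝒮 for all t ≥ 0, satisfying L'(t) = 2 W_o(L(t)) K(L(t)) for all t ≥ 0. Define 𝓛₀ := { L ∈ 𝒮 : J(L) ≤ J(L(0)) }, κ := inf { λ_min(W_o(L)) : L ∈ 𝓛₀ } and c := sup { (J(L) − J(L_KF)) / ‖K(L)‖_F² : L ∈ 𝓛₀, L ≠ L_KF }. Then J(L(t)) − J(L_KF) ≤ exp(−4 (κ²/c) t) · ( J(L(0)) − J(L_KF) ) for all t ≥ 0. -/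

import Mathlib

/-!
Why the rate holds.  The covariance `P(L)` and the Gramian `W_o(L)` solve Stein equations
`P = F P Fᵀ + Q_η` and `W = Fᵀ W F + AᵀCᵀCA`; the series converge because a spectral radius `< 1`
forces geometric decay of `F ^ k` (Gelfand's formula, `geomDecay_of_spectrum`).  Subtracting the
equations for `P` at two stabilizing gains and pairing the result with the Gramian gives an exact
formula for the difference of losses (`Jinnov_sub`),
`J(M) − J(L) = Tr (W_o(M) (D S Dᵀ − D K(L)ᵀ − K(L) Dᵀ))` with `D = M − L`.
The Gramian is continuous on `𝒮`, being the image of a fixed matrix under the inverse of an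
invertible operator that depends continuously on the gain (`continuousOn_stein`).  Dividing by the
time step along the flow therefore yields the dissipation identity
`d/dt J(L(t)) = −4 ‖W_o K‖_F²` (`hasDerivWithinAt_J`).

In particular `J` decreases, so the trajectory stays in `𝓛₀`.  There `‖W_o K‖_F ≥ κ ‖K‖_F`
(`frobNorm_mul_ge`) and `J − J(L_KF) ≤ c ‖K‖_F²`, whence `J − J(L_KF)` satisfies
`h' ≤ −4 (κ²/c) h`, and Grönwall's inequality (`exp_decay`) concludes.  When the quotients defining
`c` are unbounded or absent, the real supremum is `0`, the rate is `0`, and monotonicity suffices.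
-/

open Matrix Filter

attribute [local instance] Matrix.frobeniusNormedAddCommGroup Matrix.frobeniusNormedSpace

noncomputable section


attribute [local instance] Matrix.frobeniusNormedAddCommGroup Matrix.frobeniusNormedSpace

noncomputable section

/-- `F(L) = (I − L C) A`. -/
def Fcl {n p : ℕ} (A : Matrix (Fin n) (Fin n) ℝ) (C : Matrix (Fin p) (Fin n) ℝ)
    (L : Matrix (Fin n) (Fin p) ℝ) : Matrix (Fin n) (Fin n) ℝ :=
  (1 - L * C) * A

/-- `Q_η(L) = (I − L C) Q_w (I − L C)ᵀ + L R_v Lᵀ`. -/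
def Qeta {n p : ℕ} (C : Matrix (Fin p) (Fin n) ℝ)
    (Qw : Matrix (Fin n) (Fin n) ℝ) (Rv : Matrix (Fin p) (Fin p) ℝ)
    (L : Matrix (Fin n) (Fin p) ℝ) : Matrix (Fin n) (Fin n) ℝ :=
  (1 - L * C) * Qw * (1 - L * C)ᵀ + L * Rv * Lᵀ

/-- The set `𝒮` of stabilizing gains: every complex eigenvalue of `F(L)` has modulus `< 1`. -/
def stabSet {n p : ℕ} (A : Matrix (Fin n) (Fin n) ℝ) (C : Matrix (Fin p) (Fin n) ℝ) :
    Set (Matrix (Fin n) (Fin p) ℝ) :=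
  {L | ∀ μ ∈ spectrum ℂ ((Fcl A C L).map (fun x => (x : ℂ))), ‖μ‖ < 1}

/-- `P(L) = ∑_{k≥0} F(L)^k Q_η(L) (F(L)ᵀ)^k`. -/
def Pmat {n p : ℕ} (A : Matrix (Fin n) (Fin n) ℝ) (C : Matrix (Fin p) (Fin n) ℝ)
    (Qw : Matrix (Fin n) (Fin n) ℝ) (Rv : Matrix (Fin p) (Fin p) ℝ)
    (L : Matrix (Fin n) (Fin p) ℝ) : Matrix (Fin n) (Fin n) ℝ :=
  ∑' k : ℕ, (Fcl A C L) ^ k * Qeta C Qw Rv L * ((Fcl A C L)ᵀ) ^ k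

/-- Observability Gramian `W_o(L) = ∑_{k≥0} (F(L)ᵀ)^k Aᵀ Cᵀ C A F(L)^k`. -/
def Wo {n p : ℕ} (A : Matrix (Fin n) (Fin n) ℝ) (C : Matrix (Fin p) (Fin n) ℝ)
    (L : Matrix (Fin n) (Fin p) ℝ) : Matrix (Fin n) (Fin n) ℝ :=
  ∑' k : ℕ, ((Fcl A C L)ᵀ) ^ k * (Aᵀ * Cᵀ * C * A) * (Fcl A C L) ^ k

/-- Cross-covariance `K(L) = F(L) P(L) Aᵀ Cᵀ + (I − L C) Q_w Cᵀ − L R_v`. -/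
def Kmat {n p : ℕ} (A : Matrix (Fin n) (Fin n) ℝ) (C : Matrix (Fin p) (Fin n) ℝ)
    (Qw : Matrix (Fin n) (Fin n) ℝ) (Rv : Matrix (Fin p) (Fin p) ℝ)
    (L : Matrix (Fin n) (Fin p) ℝ) : Matrix (Fin n) (Fin p) ℝ :=
  Fcl A C L * Pmat A C Qw Rv L * Aᵀ * Cᵀ + (1 - L * C) * Qw * Cᵀ - L * Rv


/-- Innovations loss `J(L) = Tr(C A P(L) Aᵀ Cᵀ) + Tr(C Q_w Cᵀ) + Tr(R_v)`. -/
def Jinnov {n p : ℕ} (A : Matrix (Fin n) (Fin n) ℝ) (C : Matrix (Fin p) (Fin n) ℝ)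
    (Qw : Matrix (Fin n) (Fin n) ℝ) (Rv : Matrix (Fin p) (Fin p) ℝ)
    (L : Matrix (Fin n) (Fin p) ℝ) : ℝ :=
  (C * A * Pmat A C Qw Rv L * Aᵀ * Cᵀ).trace + (C * Qw * Cᵀ).trace + Rv.trace

/-- The Frobenius norm of a real matrix. -/
def frobNorm {m q : ℕ} (M : Matrix (Fin m) (Fin q) ℝ) : ℝ :=
  Real.sqrt (∑ i, ∑ j, (M i j) ^ 2)

/-- The smallest eigenvalue of a real (symmetric) matrix. -/
def lambdaMin {m : ℕ} (W : Matrix (Fin m) (Fin m) ℝ) : ℝ :=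
  sInf {r : ℝ | ∃ v : Fin m → ℝ, v ≠ 0 ∧ W.mulVec v = r • v}

section Helpers

attribute [local instance] Matrix.frobeniusNormedRing Matrix.frobeniusNormedAlgebra

/-! ### Geometric decay and Stein equations -/

/-- The powers of `F` are eventually dominated by a geometric sequence of ratio `< 1`,
in Frobenius norm. -/
def GeomDecay {n : ℕ} (F : Matrix (Fin n) (Fin n) ℝ) : Prop :=
  ∃ r : ℝ, 0 ≤ r ∧ r < 1 ∧ ∀ᶠ k : ℕ in atTop, ‖F ^ k‖ ≤ r ^ k

/-- Gelfand's formula: spectral radius `< 1` forces geometric decay of the powers. -/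
lemma geomDecay_of_spectrum {n : ℕ} (F : Matrix (Fin n) (Fin n) ℝ)
    (h : ∀ μ ∈ spectrum ℂ (F.map (fun x => (x : ℂ))), ‖μ‖ < 1) : GeomDecay F := by
  set G : Matrix (Fin n) (Fin n) ℂ := F.map (fun x => (x : ℂ)) with hG
  have hr : spectralRadius ℂ G < 1 := by
    rcases (spectrum ℂ G).eq_empty_or_nonempty with he | hne
    · simp [spectralRadius, he]
    · exact_mod_cast spectrum.spectralRadius_lt_of_forall_lt_of_nonempty hne (r := 1)
        (fun z hz => by exact_mod_cast h z hz)
  obtain ⟨r, hr1, hr2⟩ := ENNReal.lt_iff_exists_nnreal_btwn.1 hr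
  refine ⟨r, r.2, by exact_mod_cast hr2, ?_⟩
  have ht := spectrum.pow_nnnorm_pow_one_div_tendsto_nhds_spectralRadius G
  filter_upwards [ht.eventually (gt_mem_nhds hr1), eventually_gt_atTop 0] with k hk hk0
  have hmap : G ^ k = (F ^ k).map (fun x => (x : ℂ)) := by
    exact (Matrix.map_pow F (Complex.ofRealHom) k).symm
  have hn : ‖G ^ k‖ = ‖F ^ k‖ := by
    rw [hmap]
    exact Matrix.frobenius_norm_map_eq _ _ (fun a => by simp)
  have h3 : (‖G ^ k‖₊ : ENNReal) ≤ (r : ENNReal) ^ k := by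
    have h4 := ENNReal.rpow_le_rpow hk.le (Nat.cast_nonneg k : (0 : ℝ) ≤ k)
    rw [← ENNReal.rpow_mul, one_div, inv_mul_cancel₀ (by positivity), ENNReal.rpow_one,
      ENNReal.rpow_natCast] at h4
    exact h4
  rw [← hn]
  exact_mod_cast h3

lemma GeomDecay.transpose {n : ℕ} {F : Matrix (Fin n) (Fin n) ℝ} (h : GeomDecay F) :
    GeomDecay Fᵀ := by
  obtain ⟨r, h0, h1, h2⟩ := h
  refine ⟨r, h0, h1, h2.mono fun k hk => ?_⟩
  rwa [← Matrix.transpose_pow, Matrix.frobenius_norm_transpose]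

lemma GeomDecay.summable {n : ℕ} {G F : Matrix (Fin n) (Fin n) ℝ} (hG : GeomDecay G)
    (hF : GeomDecay F) (M : Matrix (Fin n) (Fin n) ℝ) :
    Summable (fun k : ℕ => G ^ k * M * F ^ k) := by
  obtain ⟨r, h0, h1, h2⟩ := hG
  obtain ⟨s, k0, k1, k2⟩ := hF
  have hs : Summable (fun k : ℕ => ‖M‖ * (r * s) ^ k) :=
    (summable_geometric_of_lt_one (by positivity) (by nlinarith)).mul_left _
  refine Summable.of_norm_bounded_eventually_nat hs ?_
  filter_upwards [h2, k2] with k a b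
  calc ‖G ^ k * M * F ^ k‖ ≤ ‖G ^ k‖ * ‖M‖ * ‖F ^ k‖ :=
        (norm_mul_le _ _).trans (mul_le_mul_of_nonneg_right (norm_mul_le _ _) (norm_nonneg _))
    _ ≤ r ^ k * ‖M‖ * s ^ k := by gcongr
    _ = ‖M‖ * (r * s) ^ k := by rw [mul_pow]; ring

/-- The series solves the Stein (discrete Lyapunov) equation. -/
lemma GeomDecay.tsum_eq {n : ℕ} {G F : Matrix (Fin n) (Fin n) ℝ} (hG : GeomDecay G)
    (hF : GeomDecay F) (M : Matrix (Fin n) (Fin n) ℝ) :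
    ∑' k : ℕ, G ^ k * M * F ^ k = G * (∑' k : ℕ, G ^ k * M * F ^ k) * F + M := by
  have hs := hG.summable hF M
  have h1 : G * (∑' k : ℕ, G ^ k * M * F ^ k) * F
      = ∑' k : ℕ, G ^ (k + 1) * M * F ^ (k + 1) := by
    rw [← hs.tsum_mul_left, ← (hs.mul_left G).tsum_mul_right]
    refine tsum_congr fun k => ?_
    rw [pow_succ' G, pow_succ F]
    simp only [mul_assoc]
  rw [h1, hs.tsum_eq_zero_add]
  simp [add_comm]

/-- The homogeneous Stein equation has only the zero solution. -/
lemma GeomDecay.eq_zero {n : ℕ} {G F X : Matrix (Fin n) (Fin n) ℝ} (hG : GeomDecay G)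
    (hF : GeomDecay F) (hX : X = G * X * F) : X = 0 := by
  have h : ∀ k : ℕ, G ^ k * X * F ^ k = X := by
    intro k
    induction k with
    | zero => simp
    | succ k ih =>
      calc G ^ (k + 1) * X * F ^ (k + 1) = G ^ k * (G * X * F) * F ^ k := by
            rw [pow_succ G, pow_succ' F]; simp only [mul_assoc]
        _ = X := by rw [← hX, ih]
  have ht := (hG.summable hF X).tendsto_atTop_zero
  simp only [h] at ht
  exact tendsto_nhds_unique tendsto_const_nhds ht

/-- The Stein operator `X ↦ X − g X f` on a normed algebra. -/
def steinOp {R : Type*} [NormedRing R] [NormedAlgebra ℝ R] (g f : R) : R →L[ℝ] R :=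
  1 - ContinuousLinearMap.mulLeftRight ℝ R g f

/-- Solutions of Stein equations with uniquely solvable homogeneous part depend continuously on
the coefficients, since inversion of operators is continuous. -/
lemma continuousOn_stein {R X : Type*} [NormedRing R] [NormedAlgebra ℝ R] [FiniteDimensional ℝ R]
    [TopologicalSpace X] {s : Set X} {g f w : X → R} (m : R) (hg : Continuous g)
    (hf : Continuous f) (hw : ∀ x ∈ s, w x = g x * w x * f x + m)
    (h0 : ∀ x ∈ s, ∀ y : R, y = g x * y * f x → y = 0) : ContinuousOn w s := by
  have : CompleteSpace R := FiniteDimensional.complete ℝ R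
  have happ : ∀ a b y : R, steinOp a b y = y - a * y * b := fun a b y => by simp [steinOp]
  have hunit : ∀ x ∈ s, IsUnit (steinOp (g x) (f x)) := by
    intro x hx
    rw [ContinuousLinearMap.isUnit_iff_bijective]
    have hinj : Function.Injective (steinOp (g x) (f x)) := by
      rw [injective_iff_map_eq_zero]
      intro y hy
      rw [happ, sub_eq_zero] at hy
      exact h0 x hx y hy
    exact ⟨hinj, (LinearMap.injective_iff_surjective
      (f := (steinOp (g x) (f x) : R →ₗ[ℝ] R))).1 hinj⟩
  have heq : Set.EqOn w (fun x => Ring.inverse (steinOp (g x) (f x)) m) s := by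
    intro x hx
    have h1 : steinOp (g x) (f x) (w x) = m := by
      rw [happ, sub_eq_iff_eq_add']
      exact hw x hx
    have h2 := congrArg (fun T : R →L[ℝ] R => T (w x))
      (Ring.inverse_mul_cancel _ (hunit x hx))
    simpa [h1] using h2.symm
  refine ContinuousOn.congr (fun x hx => ContinuousAt.continuousWithinAt ?_) heq
  have hc : Continuous fun x => steinOp (g x) (f x) :=
    continuous_const.sub
      (((ContinuousLinearMap.mulLeftRight ℝ R).continuous.comp hg).clm_apply hf)
  obtain ⟨u, hu⟩ := hunit x hx
  have hi : ContinuousAt Ring.inverse (steinOp (g x) (f x)) := by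
    rw [← hu]
    exact NormedRing.inverse_continuousAt u
  exact (ContinuousAt.comp (f := fun x => steinOp (g x) (f x)) hi
    hc.continuousAt).clm_apply continuousAt_const

/-! ### The Gramian and the covariance on the stabilizing set -/

lemma geomDecay_Fcl {n p : ℕ} {A : Matrix (Fin n) (Fin n) ℝ} {C : Matrix (Fin p) (Fin n) ℝ}
    {L : Matrix (Fin n) (Fin p) ℝ} (hL : L ∈ stabSet A C) : GeomDecay (Fcl A C L) :=
  geomDecay_of_spectrum _ hL

lemma continuous_Fcl {n p : ℕ} (A : Matrix (Fin n) (Fin n) ℝ) (C : Matrix (Fin p) (Fin n) ℝ) :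
    Continuous (Fcl A C) := by
  unfold Fcl
  fun_prop

lemma Wo_stein {n p : ℕ} {A : Matrix (Fin n) (Fin n) ℝ} {C : Matrix (Fin p) (Fin n) ℝ}
    {L : Matrix (Fin n) (Fin p) ℝ} (hL : L ∈ stabSet A C) :
    Wo A C L = (Fcl A C L)ᵀ * Wo A C L * Fcl A C L + Aᵀ * Cᵀ * C * A :=
  (geomDecay_Fcl hL).transpose.tsum_eq (geomDecay_Fcl hL) _

lemma continuousOn_Wo {n p : ℕ} (A : Matrix (Fin n) (Fin n) ℝ) (C : Matrix (Fin p) (Fin n) ℝ) :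
    ContinuousOn (Wo A C) (stabSet A C) :=
  continuousOn_stein (Aᵀ * Cᵀ * C * A) (continuous_Fcl A C).matrix_transpose (continuous_Fcl A C)
    (fun _ hL => Wo_stein hL)
    fun _ hL _ hX => (geomDecay_Fcl hL).transpose.eq_zero (geomDecay_Fcl hL) hX

lemma Pmat_stein {n p : ℕ} {A : Matrix (Fin n) (Fin n) ℝ} {C : Matrix (Fin p) (Fin n) ℝ}
    (Qw : Matrix (Fin n) (Fin n) ℝ) (Rv : Matrix (Fin p) (Fin p) ℝ)
    {L : Matrix (Fin n) (Fin p) ℝ} (hL : L ∈ stabSet A C) :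
    Pmat A C Qw Rv L = Fcl A C L * Pmat A C Qw Rv L * (Fcl A C L)ᵀ + Qeta C Qw Rv L :=
  (geomDecay_Fcl hL).tsum_eq (geomDecay_Fcl hL).transpose _

lemma Wo_posSemidef {n p : ℕ} {A : Matrix (Fin n) (Fin n) ℝ} {C : Matrix (Fin p) (Fin n) ℝ}
    {L : Matrix (Fin n) (Fin p) ℝ} (hL : L ∈ stabSet A C) : (Wo A C L).PosSemidef := by
  have hs := (geomDecay_Fcl hL).transpose.summable (geomDecay_Fcl hL) (Aᵀ * Cᵀ * C * A)
  have hterm : ∀ k : ℕ, ((Fcl A C L)ᵀ ^ k * (Aᵀ * Cᵀ * C * A) * Fcl A C L ^ k).PosSemidef := by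
    intro k
    have : (Fcl A C L)ᵀ ^ k * (Aᵀ * Cᵀ * C * A) * Fcl A C L ^ k
        = (C * A * Fcl A C L ^ k)ᴴ * (C * A * Fcl A C L ^ k) := by
      simp only [Matrix.conjTranspose_eq_transpose_of_trivial, Matrix.transpose_mul,
        Matrix.transpose_pow, Matrix.mul_assoc]
    rw [this]
    exact Matrix.posSemidef_conjTranspose_mul_self _
  refine Matrix.PosSemidef.of_dotProduct_mulVec_nonneg ?_ fun x => ?_
  · change (Wo A C L)ᴴ = Wo A C L
    unfold Wo
    rw [Matrix.conjTranspose_tsum]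
    exact tsum_congr fun k => (hterm k).isHermitian
  · have hc : Continuous fun M : Matrix (Fin n) (Fin n) ℝ => star x ⬝ᵥ (M *ᵥ x) := by fun_prop
    have hlim := (hc.tendsto _).comp hs.hasSum
    refine ge_of_tendsto' hlim fun s => ?_
    exact (Matrix.posSemidef_sum s fun k _ => hterm k).dotProduct_mulVec_nonneg x

lemma Pmat_transpose {n p : ℕ} {A : Matrix (Fin n) (Fin n) ℝ} {C : Matrix (Fin p) (Fin n) ℝ}
    {Qw : Matrix (Fin n) (Fin n) ℝ} {Rv : Matrix (Fin p) (Fin p) ℝ} (hQ : Qwᵀ = Qw)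
    (hR : Rvᵀ = Rv) (L : Matrix (Fin n) (Fin p) ℝ) :
    (Pmat A C Qw Rv L)ᵀ = Pmat A C Qw Rv L := by
  unfold Pmat
  rw [Matrix.transpose_tsum]
  refine tsum_congr fun k => ?_
  simp only [Qeta, Matrix.transpose_mul, Matrix.transpose_add, Matrix.transpose_pow,
    Matrix.transpose_transpose, hQ, hR, Matrix.mul_assoc]

/-! ### Difference formula for the loss -/

/-- Innovation covariance `C (A P(L) Aᵀ + Q_w) Cᵀ + R_v`. -/
def innovCov {n p : ℕ} (A : Matrix (Fin n) (Fin n) ℝ) (C : Matrix (Fin p) (Fin n) ℝ)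
    (Qw : Matrix (Fin n) (Fin n) ℝ) (Rv : Matrix (Fin p) (Fin p) ℝ)
    (L : Matrix (Fin n) (Fin p) ℝ) : Matrix (Fin p) (Fin p) ℝ :=
  C * (A * Pmat A C Qw Rv L * Aᵀ + Qw) * Cᵀ + Rv

/-- Subtracting the two Stein equations for `P` leaves a Stein equation for the difference. -/
lemma Pmat_sub {n p : ℕ} {A : Matrix (Fin n) (Fin n) ℝ} {C : Matrix (Fin p) (Fin n) ℝ}
    {Qw : Matrix (Fin n) (Fin n) ℝ} {Rv : Matrix (Fin p) (Fin p) ℝ} (hQ : Qwᵀ = Qw)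
    (hR : Rvᵀ = Rv) {L M : Matrix (Fin n) (Fin p) ℝ} (hL : L ∈ stabSet A C)
    (hM : M ∈ stabSet A C) :
    Pmat A C Qw Rv M - Pmat A C Qw Rv L =
      Fcl A C M * (Pmat A C Qw Rv M - Pmat A C Qw Rv L) * (Fcl A C M)ᵀ +
      ((M - L) * innovCov A C Qw Rv L * (M - L)ᵀ - (M - L) * (Kmat A C Qw Rv L)ᵀ
        - Kmat A C Qw Rv L * (M - L)ᵀ) := by
  have h1 := Pmat_stein Qw Rv hL
  have h2 := Pmat_stein Qw Rv hM
  have hP := Pmat_transpose (A := A) (C := C) hQ hR L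
  set P := Pmat A C Qw Rv L with hPdef
  set P' := Pmat A C Qw Rv M
  have key : Fcl A C M * P' * (Fcl A C M)ᵀ + Qeta C Qw Rv M
      - (Fcl A C L * P * (Fcl A C L)ᵀ + Qeta C Qw Rv L) =
      Fcl A C M * (P' - P) * (Fcl A C M)ᵀ +
      ((M - L) * innovCov A C Qw Rv L * (M - L)ᵀ - (M - L) * (Kmat A C Qw Rv L)ᵀ
        - Kmat A C Qw Rv L * (M - L)ᵀ) := by
    simp only [innovCov, Kmat, Fcl, Qeta, ← hPdef]
    simp only [Matrix.transpose_mul, Matrix.transpose_add, Matrix.transpose_sub,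
      Matrix.transpose_transpose, Matrix.transpose_one, hQ, hR, hP, Matrix.mul_add,
      Matrix.add_mul, Matrix.mul_sub, Matrix.sub_mul, Matrix.mul_one, Matrix.one_mul,
      Matrix.mul_assoc]
    abel
  rw [← key, ← h1, ← h2]

/-- Exact finite-difference formula for the loss; the Gramian is taken at the new gain `M`. -/
lemma Jinnov_sub {n p : ℕ} {A : Matrix (Fin n) (Fin n) ℝ} {C : Matrix (Fin p) (Fin n) ℝ}
    {Qw : Matrix (Fin n) (Fin n) ℝ} {Rv : Matrix (Fin p) (Fin p) ℝ} (hQ : Qwᵀ = Qw)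
    (hR : Rvᵀ = Rv) {L M : Matrix (Fin n) (Fin p) ℝ} (hL : L ∈ stabSet A C)
    (hM : M ∈ stabSet A C) :
    Jinnov A C Qw Rv M - Jinnov A C Qw Rv L =
      (Wo A C M * ((M - L) * innovCov A C Qw Rv L * (M - L)ᵀ - (M - L) * (Kmat A C Qw Rv L)ᵀ
        - Kmat A C Qw Rv L * (M - L)ᵀ)).trace := by
  have hd := Pmat_sub hQ hR hL hM
  have hw := Wo_stein hM
  set N := (M - L) * innovCov A C Qw Rv L * (M - L)ᵀ - (M - L) * (Kmat A C Qw Rv L)ᵀ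
        - Kmat A C Qw Rv L * (M - L)ᵀ
  set D := Pmat A C Qw Rv M - Pmat A C Qw Rv L with hD
  set W := Wo A C M
  set F := Fcl A C M
  have e1 : Jinnov A C Qw Rv M - Jinnov A C Qw Rv L = ((Aᵀ * Cᵀ * C * A) * D).trace := by
    have : ((Aᵀ * Cᵀ * C * A) * D).trace = (C * A * D * (Aᵀ * Cᵀ)).trace := by
      rw [Matrix.trace_mul_comm (C * A * D)]
      simp only [Matrix.mul_assoc]
    rw [this, hD, Jinnov, Jinnov]
    simp only [Matrix.mul_sub, Matrix.sub_mul, Matrix.trace_sub, Matrix.mul_assoc]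
    ring
  have e2 : Aᵀ * Cᵀ * C * A = W - Fᵀ * W * F := by rw [eq_sub_iff_add_eq']; exact hw.symm
  have e3 : N = D - F * D * Fᵀ := by rw [eq_sub_iff_add_eq']; exact hd.symm
  have e4 : (Fᵀ * W * F * D).trace = (W * (F * D * Fᵀ)).trace := by
    rw [← Matrix.mul_assoc W, Matrix.trace_mul_comm _ Fᵀ]
    simp only [Matrix.mul_assoc]
  rw [e1, e2, e3, Matrix.sub_mul, Matrix.mul_sub W D, Matrix.trace_sub, Matrix.trace_sub, e4]

lemma frobNorm_sq {m q : ℕ} (M : Matrix (Fin m) (Fin q) ℝ) :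
    frobNorm M ^ 2 = ∑ i, ∑ j, (M i j) ^ 2 :=
  Real.sq_sqrt (Finset.sum_nonneg fun _ _ => Finset.sum_nonneg fun _ _ => sq_nonneg _)

lemma frobNorm_sq_eq_trace {m q : ℕ} (M : Matrix (Fin m) (Fin q) ℝ) :
    frobNorm M ^ 2 = (M * Mᵀ).trace := by
  rw [frobNorm_sq]
  simp [Matrix.trace, Matrix.mul_apply, sq]

/-! ### Dissipation along the flow -/

/-- Energy dissipation along the flow: `d/dt J(L(t)) = −4 ‖W_o K‖_F²`. -/
lemma hasDerivWithinAt_J {n p : ℕ} {A : Matrix (Fin n) (Fin n) ℝ} {C : Matrix (Fin p) (Fin n) ℝ}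
    {Qw : Matrix (Fin n) (Fin n) ℝ} {Rv : Matrix (Fin p) (Fin p) ℝ} (hQ : Qwᵀ = Qw)
    (hR : Rvᵀ = Rv) (Lt : ℝ → Matrix (Fin n) (Fin p) ℝ)
    (hmem : ∀ t : ℝ, 0 ≤ t → Lt t ∈ stabSet A C) (t : ℝ) (ht : 0 ≤ t)
    (hflow : HasDerivAt Lt ((2 : ℝ) • (Wo A C (Lt t) * Kmat A C Qw Rv (Lt t))) t) :
    HasDerivWithinAt (fun s => Jinnov A C Qw Rv (Lt s))
      (-4 * frobNorm (Wo A C (Lt t) * Kmat A C Qw Rv (Lt t)) ^ 2) (Set.Ici 0) t := by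
  set K := Kmat A C Qw Rv (Lt t) with hK
  set S := innovCov A C Qw Rv (Lt t) with hS
  rw [hasDerivWithinAt_iff_tendsto_slope]
  have hslope : Tendsto (slope Lt t) (nhdsWithin t (Set.Ici 0 \ {t}))
      (nhds ((2 : ℝ) • (Wo A C (Lt t) * K))) :=
    hasDerivWithinAt_iff_tendsto_slope.1 hflow.hasDerivWithinAt
  have hcont : Tendsto Lt (nhdsWithin t (Set.Ici 0 \ {t})) (nhds (Lt t)) :=
    hflow.continuousAt.tendsto.mono_left nhdsWithin_le_nhds
  have hW : Tendsto (fun s => Wo A C (Lt s)) (nhdsWithin t (Set.Ici 0 \ {t}))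
      (nhds (Wo A C (Lt t))) := by
    refine (continuousOn_Wo A C (Lt t) (hmem t ht)).tendsto.comp ?_
    refine tendsto_nhdsWithin_of_tendsto_nhds_of_eventually_within _ hcont ?_
    filter_upwards [self_mem_nhdsWithin] with s hs
    exact hmem s hs.1
  have hΨ : Continuous fun x : Matrix (Fin n) (Fin n) ℝ × Matrix (Fin n) (Fin p) ℝ ×
      Matrix (Fin n) (Fin p) ℝ =>
      (x.1 * (x.2.1 * S * (x.2.2 - Lt t)ᵀ - x.2.1 * Kᵀ - K * x.2.1ᵀ)).trace := by fun_prop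
  have hlim := (hΨ.tendsto _).comp (hW.prodMk_nhds (hslope.prodMk_nhds hcont))
  have hval : (Wo A C (Lt t) * (((2 : ℝ) • (Wo A C (Lt t) * K)) * S * (Lt t - Lt t)ᵀ
      - ((2 : ℝ) • (Wo A C (Lt t) * K)) * Kᵀ - K * ((2 : ℝ) • (Wo A C (Lt t) * K))ᵀ)).trace
      = -4 * frobNorm (Wo A C (Lt t) * K) ^ 2 := by
    have hWt : (Wo A C (Lt t))ᵀ = Wo A C (Lt t) := (Wo_posSemidef (hmem t ht)).isHermitian
    rw [frobNorm_sq_eq_trace]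
    set W := Wo A C (Lt t)
    have e : (W * (W * (K * Kᵀ))).trace = (W * (K * (Kᵀ * W))).trace := by
      rw [Matrix.trace_mul_comm]
      simp only [Matrix.mul_assoc]
    simp only [sub_self, Matrix.transpose_zero, Matrix.mul_zero, zero_sub, Matrix.mul_sub,
      Matrix.mul_neg, Matrix.transpose_smul, Matrix.mul_smul, Matrix.smul_mul,
      Matrix.transpose_mul, hWt, Matrix.trace_sub, Matrix.trace_neg, Matrix.trace_smul,
      smul_eq_mul, Matrix.mul_assoc, e]
    ring
  rw [← hval]
  refine hlim.congr' ?_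
  filter_upwards [self_mem_nhdsWithin] with s hs
  have hJ := Jinnov_sub hQ hR (hmem t ht) (hmem s hs.1)
  rw [slope_def_field, hJ, ← hK, ← hS, div_eq_inv_mul, ← smul_eq_mul, ← Matrix.trace_smul]
  simp only [Function.comp, slope_def_module, Matrix.mul_sub, Matrix.smul_mul, Matrix.mul_smul,
    Matrix.transpose_smul, Matrix.transpose_sub, smul_sub, Matrix.sub_mul]

/-! ### The smallest eigenvalue -/

lemma eigenvalue_nonneg {m : ℕ} {W : Matrix (Fin m) (Fin m) ℝ} (hW : W.PosSemidef) {r : ℝ}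
    {v : Fin m → ℝ} (hv : v ≠ 0) (h : W.mulVec v = r • v) : 0 ≤ r := by
  have h1 := hW.dotProduct_mulVec_nonneg v
  rw [h, dotProduct_smul, smul_eq_mul] at h1
  have h2 : 0 < star v ⬝ᵥ v := Matrix.dotProduct_star_self_pos_iff.2 hv
  exact nonneg_of_mul_nonneg_left h1 h2

lemma lambdaMin_nonneg {m : ℕ} {W : Matrix (Fin m) (Fin m) ℝ} (hW : W.PosSemidef) :
    0 ≤ lambdaMin W :=
  Real.sInf_nonneg fun _ ⟨_, hv, h⟩ => eigenvalue_nonneg hW hv h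

lemma posSemidef_sub_lambdaMin {m : ℕ} {W : Matrix (Fin m) (Fin m) ℝ} (hW : W.PosSemidef) :
    (W - lambdaMin W • (1 : Matrix (Fin m) (Fin m) ℝ)).PosSemidef := by
  have hh : (W - lambdaMin W • (1 : Matrix (Fin m) (Fin m) ℝ)).IsHermitian := by
    refine hW.isHermitian.sub ?_
    simp [Matrix.IsHermitian]
  rw [hh.posSemidef_iff_eigenvalues_nonneg]
  intro i
  have h1 := hh.mulVec_eigenvectorBasis i
  have h2 : (hh.eigenvectorBasis i).ofLp ≠ 0 := fun h =>
    hh.eigenvectorBasis.toBasis.ne_zero i (by ext j; simpa using congrFun h j)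
  have h3 : W.mulVec (hh.eigenvectorBasis i).ofLp
      = (hh.eigenvalues i + lambdaMin W) • (hh.eigenvectorBasis i).ofLp := by
    rw [Matrix.sub_mulVec, Matrix.smul_mulVec, Matrix.one_mulVec, sub_eq_iff_eq_add] at h1
    rw [h1, add_smul]
  have h4 : lambdaMin W ≤ hh.eigenvalues i + lambdaMin W :=
    csInf_le ⟨0, fun _ ⟨_, hv, h⟩ => eigenvalue_nonneg hW hv h⟩ ⟨_, h2, h3⟩
  simpa using h4

/-- `‖W K‖_F² ≥ k² ‖K‖_F²` when `0 ≤ k ≤ λ_min(W)`. -/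
lemma frobNorm_mul_ge {m q : ℕ} {W : Matrix (Fin m) (Fin m) ℝ} (hW : W.PosSemidef)
    (K : Matrix (Fin m) (Fin q) ℝ) {k : ℝ} (hk0 : 0 ≤ k) (hk : k ≤ lambdaMin W) :
    k ^ 2 * frobNorm K ^ 2 ≤ frobNorm (W * K) ^ 2 := by
  rw [frobNorm_sq, frobNorm_sq, Finset.sum_comm, Finset.sum_comm (γ := Fin m), Finset.mul_sum]
  refine Finset.sum_le_sum fun j _ => ?_
  set v : Fin m → ℝ := fun i => K i j with hv
  set l := lambdaMin W with hl
  have h1 : l * (v ⬝ᵥ v) ≤ v ⬝ᵥ (W *ᵥ v) := by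
    have h := (posSemidef_sub_lambdaMin hW).dotProduct_mulVec_nonneg v
    rw [Matrix.sub_mulVec, Matrix.smul_mulVec, Matrix.one_mulVec, dotProduct_sub,
      dotProduct_smul, smul_eq_mul, star_trivial] at h
    linarith
  -- Expanding `‖W v − l v‖² ≥ 0` replaces Cauchy–Schwarz.
  have h2 : 0 ≤ (W *ᵥ v - l • v) ⬝ᵥ (W *ᵥ v - l • v) :=
    Finset.sum_nonneg fun i _ => mul_self_nonneg _
  have h3 : 0 ≤ v ⬝ᵥ v := Finset.sum_nonneg fun i _ => mul_self_nonneg _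
  simp only [sub_dotProduct, dotProduct_sub, dotProduct_smul, smul_dotProduct, smul_eq_mul] at h2
  rw [dotProduct_comm (W *ᵥ v) v] at h2
  have e1 : ∑ i, K i j ^ 2 = v ⬝ᵥ v := by simp [dotProduct, hv, sq]
  have e2 : ∑ i, (W * K) i j ^ 2 = (W *ᵥ v) ⬝ᵥ (W *ᵥ v) := by
    simp [dotProduct, hv, sq, Matrix.mul_apply, Matrix.mulVec]
  rw [e1, e2]
  have h4 : 0 ≤ l := hk0.trans hk
  have h5 := mul_le_mul_of_nonneg_left h1 h4
  have h6 : k ^ 2 * (v ⬝ᵥ v) ≤ l ^ 2 * (v ⬝ᵥ v) := by gcongr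
  nlinarith

lemma frobNorm_sq_pos {m q : ℕ} {M : Matrix (Fin m) (Fin q) ℝ} (h : M ≠ 0) :
    0 < frobNorm M ^ 2 := by
  rw [frobNorm_sq]
  obtain ⟨i, j, hij⟩ : ∃ i j, M i j ≠ 0 := by
    by_contra! hc
    exact h (by ext i j; exact hc i j)
  refine Finset.sum_pos' (fun _ _ => Finset.sum_nonneg fun _ _ => sq_nonneg _)
    ⟨i, Finset.mem_univ _, ?_⟩
  exact Finset.sum_pos' (fun _ _ => sq_nonneg _) ⟨j, Finset.mem_univ _, by positivity⟩

/-! ### Exponential decay -/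

/-- Grönwall's inequality on `[0, ∞)` in the form `h' ≤ −a h`. -/
lemma exp_decay {h h' : ℝ → ℝ} {a : ℝ}
    (hd : ∀ t, 0 ≤ t → HasDerivWithinAt h (h' t) (Set.Ici 0) t)
    (hle : ∀ t, 0 ≤ t → h' t ≤ -a * h t) (t : ℝ) (ht : 0 ≤ t) :
    h t ≤ Real.exp (-a * t) * h 0 := by
  have hg : ∀ s, 0 ≤ s → HasDerivWithinAt (fun s => Real.exp (a * s) * h s)
      (Real.exp (a * s) * (a * 1) * h s + Real.exp (a * s) * h' s) (Set.Ici 0) s := fun s hs =>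
    (((hasDerivAt_id s).const_mul a).exp.hasDerivWithinAt).mul (hd s hs)
  have hanti : AntitoneOn (fun s => Real.exp (a * s) * h s) (Set.Ici 0) := by
    refine antitoneOn_of_hasDerivWithinAt_nonpos (convex_Ici 0)
      (fun s hs => (hg s hs).continuousWithinAt)
      (fun s hs => (hg s (interior_subset hs)).mono interior_subset) fun s hs => ?_
    have h1 := hle s (interior_subset hs)
    have h2 := Real.exp_pos (a * s)
    nlinarith
  have h1 := hanti (Set.mem_Ici.2 le_rfl) (Set.mem_Ici.2 ht) ht
  simp only [mul_zero, Real.exp_zero, one_mul] at h1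
  calc h t = Real.exp (-a * t) * (Real.exp (a * t) * h t) := by
        rw [← mul_assoc, ← Real.exp_add]; simp
    _ ≤ _ := by gcongr

end Helpers

/-- **Geometric convergence rate of the gradient flow (Theorem 2, part 2).**
With `κ = inf {λ_min(W_o(L)) : L ∈ 𝓛₀}` and
`c = sup {(J(L) − J(L_KF))/‖K(L)‖_F² : L ∈ 𝓛₀, L ≠ L_KF}`, a gradient-flow trajectory
`L'(t) = 2 W_o(L(t)) K(L(t))` staying in `𝒮` satisfies
`J(L(t)) − J(L_KF) ≤ e^{−4(κ²/c) t} (J(L(0)) − J(L_KF))` for all `t ≥ 0`. -/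
theorem gradient_flow_geometric_rate {n p : ℕ}
    (A : Matrix (Fin n) (Fin n) ℝ) (C : Matrix (Fin p) (Fin n) ℝ)
    (Qw : Matrix (Fin n) (Fin n) ℝ) (hQw : Qw.PosDef)
    (Rv : Matrix (Fin p) (Fin p) ℝ) (hRv : Rv.PosDef)
    (hobs : ∀ v : Fin n → ℝ, (∀ k : ℕ, (C * A * A ^ k).mulVec v = 0) → v = 0)
    (LKF : Matrix (Fin n) (Fin p) ℝ) (hKF : LKF ∈ stabSet A C)
    (hKKF : Kmat A C Qw Rv LKF = 0)
    (huniq : ∀ L ∈ stabSet A C, Kmat A C Qw Rv L = 0 → L = LKF)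
    (hmin : ∀ L ∈ stabSet A C, Jinnov A C Qw Rv LKF ≤ Jinnov A C Qw Rv L)
    (Lt : ℝ → Matrix (Fin n) (Fin p) ℝ)
    (hmem : ∀ t : ℝ, 0 ≤ t → Lt t ∈ stabSet A C)
    (hflow : ∀ t : ℝ, 0 ≤ t →
      HasDerivAt Lt ((2 : ℝ) • (Wo A C (Lt t) * Kmat A C Qw Rv (Lt t))) t) :
    ∀ t : ℝ, 0 ≤ t →
      Jinnov A C Qw Rv (Lt t) - Jinnov A C Qw Rv LKF
        ≤ Real.exp (-4 * ((sInf ((fun L => lambdaMin (Wo A C L)) ''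
              {L | L ∈ stabSet A C ∧ Jinnov A C Qw Rv L ≤ Jinnov A C Qw Rv (Lt 0)})) ^ 2 /
            sSup ((fun L => (Jinnov A C Qw Rv L - Jinnov A C Qw Rv LKF) /
                (frobNorm (Kmat A C Qw Rv L)) ^ 2) ''
              {L | (L ∈ stabSet A C ∧ Jinnov A C Qw Rv L ≤ Jinnov A C Qw Rv (Lt 0))
                    ∧ L ≠ LKF})) * t)
          * (Jinnov A C Qw Rv (Lt 0) - Jinnov A C Qw Rv LKF) := by
  have hQ : Qwᵀ = Qw := hQw.isHermitian
  have hR : Rvᵀ = Rv := hRv.isHermitian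
  set κ := sInf ((fun L => lambdaMin (Wo A C L)) ''
    {L | L ∈ stabSet A C ∧ Jinnov A C Qw Rv L ≤ Jinnov A C Qw Rv (Lt 0)}) with hκ
  set T := (fun L => (Jinnov A C Qw Rv L - Jinnov A C Qw Rv LKF) /
      (frobNorm (Kmat A C Qw Rv L)) ^ 2) ''
    {L | (L ∈ stabSet A C ∧ Jinnov A C Qw Rv L ≤ Jinnov A C Qw Rv (Lt 0)) ∧ L ≠ LKF} with hT
  have hderiv : ∀ t, 0 ≤ t → HasDerivWithinAt
      (fun s => Jinnov A C Qw Rv (Lt s) - Jinnov A C Qw Rv LKF)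
      (-4 * frobNorm (Wo A C (Lt t) * Kmat A C Qw Rv (Lt t)) ^ 2) (Set.Ici 0) t := fun t ht =>
    (hasDerivWithinAt_J hQ hR Lt hmem t ht (hflow t ht)).sub_const _
  -- The case of rate `0`: the trajectory stays in the sublevel set of its initial value.
  have hmono : ∀ t, 0 ≤ t → Jinnov A C Qw Rv (Lt t) ≤ Jinnov A C Qw Rv (Lt 0) := by
    intro t ht
    have h := exp_decay (a := 0) hderiv (fun s _ => by
      have := sq_nonneg (frobNorm (Wo A C (Lt s) * Kmat A C Qw Rv (Lt s)))
      linarith) t ht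
    simpa using h
  have hκ0 : 0 ≤ κ := by
    refine Real.sInf_nonneg ?_
    rintro _ ⟨L, hL, rfl⟩
    exact lambdaMin_nonneg (Wo_posSemidef hL.1)
  have hκle : ∀ t, 0 ≤ t → κ ≤ lambdaMin (Wo A C (Lt t)) := by
    intro t ht
    refine csInf_le ⟨0, ?_⟩ ⟨Lt t, ⟨hmem t ht, hmono t ht⟩, rfl⟩
    rintro _ ⟨L, hL, rfl⟩
    exact lambdaMin_nonneg (Wo_posSemidef hL.1)
  have hc0 : 0 ≤ sSup T := by
    refine Real.sSup_nonneg ?_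
    rintro _ ⟨L, hL, rfl⟩
    exact div_nonneg (sub_nonneg.2 (hmin L hL.1.1)) (sq_nonneg _)
  intro t ht
  have hrate := exp_decay (a := 4 * (κ ^ 2 / sSup T)) hderiv (fun s hs => by
    have hbound := frobNorm_mul_ge (Wo_posSemidef (hmem s hs)) (Kmat A C Qw Rv (Lt s)) hκ0
      (hκle s hs)
    suffices h : κ ^ 2 / sSup T * (Jinnov A C Qw Rv (Lt s) - Jinnov A C Qw Rv LKF)
        ≤ κ ^ 2 * frobNorm (Kmat A C Qw Rv (Lt s)) ^ 2 by linarith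
    have hnn : 0 ≤ κ ^ 2 * frobNorm (Kmat A C Qw Rv (Lt s)) ^ 2 := by positivity
    by_cases hz : Lt s = LKF
    · simpa [hz] using hnn.trans_eq (by rw [hz])
    -- `sSup T = 0` also covers an unbounded `T`; the claimed rate is then `0`.
    rcases hc0.eq_or_lt with hc | hc
    · simpa [← hc] using hnn
    have hbdd : BddAbove T := by
      by_contra hb
      rw [Real.sSup_of_not_bddAbove hb] at hc
      exact lt_irrefl _ hc
    have hK : 0 < frobNorm (Kmat A C Qw Rv (Lt s)) ^ 2 :=
      frobNorm_sq_pos fun h => hz (huniq _ (hmem s hs) h)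
    have hle := le_csSup hbdd ⟨Lt s, ⟨⟨hmem s hs, hmono s hs⟩, hz⟩, rfl⟩
    rw [div_le_iff₀ hK] at hle
    calc κ ^ 2 / sSup T * (Jinnov A C Qw Rv (Lt s) - Jinnov A C Qw Rv LKF)
        ≤ κ ^ 2 / sSup T * (sSup T * frobNorm (Kmat A C Qw Rv (Lt s)) ^ 2) := by gcongr
      _ = κ ^ 2 * frobNorm (Kmat A C Qw Rv (Lt s)) ^ 2 := by field_simp) t ht
  convert hrate using 3
  ring

end
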